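/- For all α, β ∈ ASP, the following minima in Bruhat order all exist, and all equal α ◁ β⁻¹: (1) min {α₁ ∘ β₁⁻¹ : α₁, β₁ ∈ ASP, α₁ ≥ α, β₁ ≤ β}; (2) min {α ∘ β₁⁻¹ : β₁ ∈ ASP, β₁ ≤_χ β}; (3) min {α₁ ∘ β⁻¹ : α₁ ∈ ASP, α₁ ≥ α, χ_{α₁} = χ_α}. -/

import Mathlib

/-!
Write `s` for slipface functions, so that `s_δ(a,b) = max_ℓ [s_α(a,ℓ) - s_β(b,ℓ)]`.

Lower bound: reindexing along `β₁` gives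
`s_{α₁β₁⁻¹}(a,b) = #{m : b ≤ β₁ m, α₁ m < a} ≥ s_{α₁}(a,ℓ) - s_{β₁}(b,ℓ)` for every `ℓ`
(`lower_bound`).

Attainment: `δ = αβ₁⁻¹` forces `β₁ = δ⁻¹α`, and `δ = α₁β⁻¹` forces `α₁ = δβ`. The maximizing `ℓ` depends
monotonically on `a` and on `b`, because slipface functions are supermodular (`sF_supermod`). Hence
`δ` and `β⁻¹` have no common inversion (`inv_disjoint`), and the inversions of `δ⁻¹` are inversions
of `α⁻¹` (`inv_subset`). The first fact provides, for given `a` and `ℓ`, a cut `b` with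
`s_{δβ}(a,ℓ) = s_δ(a,b) + s_β(b,ℓ) ≥ s_α(a,ℓ)` (`le_mul`); the second provides, for given `b` and
`ℓ`, a cut `a` with `s_{δ⁻¹α}(b,ℓ) ≤ s_α(a,ℓ) - s_δ(a,b) ≤ s_β(b,ℓ)` (`mul_le`).

The shift is a homomorphism on almost-sign-preserving permutations (`shift_mul`), and
`s_α(a,b) - s_{α⁻¹}(b,a) = χ_α + a - b` (`sF_sub_sF_inv`). Evaluating far out shows
`χ_δ = χ_α - χ_β` (`shift_triL`), which makes the shifts of the two candidates correct.
-/


/-- A permutation of ℤ is almost-sign-preserving if only finitely many `n` have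
exactly one of `n`, `α n` negative. -/
def ASP (α : Equiv.Perm ℤ) : Prop := {n : ℤ | Xor' (n < 0) (α n < 0)}.Finite

/-- The slipface function `s_α(a,b) = #{n ≥ b : α n < a}`. -/
noncomputable def sF (α : Equiv.Perm ℤ) : ℤ → ℤ → ℕ :=
  fun a b => {n : ℤ | b ≤ n ∧ α n < a}.ncard

/-- The shift `χ_α = s_α(0,0) - s_{α⁻¹}(0,0)`. -/
noncomputable def shiftASP (α : Equiv.Perm ℤ) : ℤ :=
  (sF α 0 0 : ℤ) - (sF α⁻¹ 0 0 : ℤ)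

/-- Bruhat order on ASP: pointwise comparison of slipface functions. -/
def BruhatLE (α β : Equiv.Perm ℤ) : Prop := ∀ a b : ℤ, sF α a b ≤ sF β a b

/-- `α ≤_χ β`: Bruhat order together with equality of shifts. -/
def BruhatLEchi (α β : Equiv.Perm ℤ) : Prop := BruhatLE α β ∧ shiftASP α = shiftASP β

/-- `γ` is the Demazure product `α ⋆ β`:
`s_γ(a,b) = min_{ℓ} [s_α(a,ℓ) + s_β(ℓ,b)]`. -/
def IsDem (α β γ : Equiv.Perm ℤ) : Prop :=
  ∀ a b : ℤ, IsLeast {x : ℕ | ∃ ℓ : ℤ, x = sF α a ℓ + sF β ℓ b} (sF γ a b)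

/-- `γ = α ◁ β`: `s_γ(a,b) = max_ℓ [s_α(a,ℓ) - s_{β⁻¹}(b,ℓ)]`. -/
def IsTriL (α β γ : Equiv.Perm ℤ) : Prop :=
  ∀ a b : ℤ, IsGreatest {x : ℤ | ∃ ℓ : ℤ, x = (sF α a ℓ : ℤ) - (sF β⁻¹ b ℓ : ℤ)}
    ((sF γ a b : ℤ))

/-- `γ = α ▷ β`: `s_γ(a,b) = max_ℓ [s_β(ℓ,b) - s_{α⁻¹}(ℓ,a)]`. -/
def IsTriR (α β γ : Equiv.Perm ℤ) : Prop :=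
  ∀ a b : ℤ, IsGreatest {x : ℤ | ∃ ℓ : ℤ, x = (sF β ℓ b : ℤ) - (sF α⁻¹ ℓ a : ℤ)}
    ((sF γ a b : ℤ))

/-- The set of inversions of a permutation. -/
def InvSet (α : Equiv.Perm ℤ) : Set (ℤ × ℤ) := {p : ℤ × ℤ | p.1 < p.2 ∧ α p.2 < α p.1}

/-! ### Slipface functions -/

theorem asp_iff {α : Equiv.Perm ℤ} : ASP α ↔ {n : ℤ | Xor (n < 0) (α n < 0)}.Finite := Iff.rfl

theorem asp_one : ASP 1 := by
  rw [asp_iff]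
  convert Set.finite_empty (α := ℤ)
  ext n
  simp [Xor]

theorem asp_mul {α β : Equiv.Perm ℤ} (hα : ASP α) (hβ : ASP β) : ASP (α * β) := by
  rw [asp_iff] at *
  refine (hβ.union (hα.preimage (f := β) β.injective.injOn)).subset ?_
  intro n hn
  simp only [Xor, Set.mem_ofPred_eq, Equiv.Perm.mul_apply, Set.mem_union, Set.mem_preimage] at *
  tauto

theorem apply_inv (α : Equiv.Perm ℤ) (n : ℤ) : α (α⁻¹ n) = n := by simp

theorem asp_inv {α : Equiv.Perm ℤ} (hα : ASP α) : ASP α⁻¹ := by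
  rw [asp_iff] at *
  refine (hα.image α).subset ?_
  intro n hn
  refine ⟨α⁻¹ n, ?_, by simp⟩
  simp only [Xor, Set.mem_ofPred_eq, apply_inv] at *
  tauto

/-- The set counted by the slipface function is finite. -/
theorem asp_finite {α : Equiv.Perm ℤ} (hα : ASP α) (a b : ℤ) :
    {n : ℤ | b ≤ n ∧ α n < a}.Finite := by
  rw [asp_iff] at hα
  refine ((hα.union (Set.finite_Ico b 0)).union
    ((Set.finite_Ico 0 a).preimage (f := α) α.injective.injOn)).subset ?_
  intro n hn
  simp only [Xor, Set.mem_ofPred_eq, Set.mem_union, Set.mem_preimage, Set.mem_Ico] at *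
  omega

/-- Reindexing `n = β m` in the set counted by the slipface function of `α β⁻¹`. -/
theorem image_mul_inv (α β : Equiv.Perm ℤ) (a b : ℤ) :
    {n : ℤ | b ≤ n ∧ (α * β⁻¹) n < a} = β '' {m : ℤ | b ≤ β m ∧ α m < a} := by
  ext n
  constructor
  · intro h
    exact ⟨β⁻¹ n, by simpa using h, by simp⟩
  · rintro ⟨m, hm, rfl⟩
    simpa using hm

theorem sF_mul_inv (α β : Equiv.Perm ℤ) (a b : ℤ) :
    sF (α * β⁻¹) a b = {m : ℤ | b ≤ β m ∧ α m < a}.ncard := by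
  unfold sF
  rw [image_mul_inv, Set.ncard_image_of_injective _ β.injective]

theorem finite_mul_inv {α β : Equiv.Perm ℤ} (hα : ASP α) (hβ : ASP β) (a b : ℤ) :
    {m : ℤ | b ≤ β m ∧ α m < a}.Finite := by
  have h := asp_finite (asp_mul hα (asp_inv hβ)) a b
  rw [image_mul_inv] at h
  exact h.of_finite_image β.injective.injOn

theorem sF_step_right {α : Equiv.Perm ℤ} (hα : ASP α) (a b : ℤ) :
    sF α a b = sF α a (b + 1) + if α b < a then 1 else 0 := by
  unfold sF
  split_ifs with h
  · rw [← Set.ncard_insert_of_notMem (a := b) (by simp) (asp_finite hα a (b + 1))]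
    congr 1
    ext n
    simp only [Set.mem_ofPred_eq, Set.mem_insert_iff]
    rcases eq_or_ne n b with rfl | hn
    · simp [h]
    · simp only [hn, false_or]
      omega
  · rw [add_zero]
    congr 1
    ext n
    simp only [Set.mem_ofPred_eq]
    rcases eq_or_ne n b with rfl | hn
    · simp; omega
    · omega

theorem sF_step_left {α : Equiv.Perm ℤ} (hα : ASP α) (a b : ℤ) :
    sF α (a + 1) b = sF α a b + if b ≤ α⁻¹ a then 1 else 0 := by
  have key : ∀ n, α n = a ↔ n = α⁻¹ a := fun n => by rw [Equiv.Perm.eq_inv_iff_eq]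
  unfold sF
  split_ifs with h
  · rw [← Set.ncard_insert_of_notMem (a := α⁻¹ a) (by simp) (asp_finite hα a b)]
    congr 1
    ext n
    have := key n
    simp only [Set.mem_ofPred_eq, Set.mem_insert_iff]
    omega
  · rw [add_zero]
    congr 1
    ext n
    have := key n
    simp only [Set.mem_ofPred_eq]
    omega

/-- Slipface functions are supermodular for `≤` in the first and `≥` in the second variable:
`s(a,ℓ) - s(a,ℓ') = #{n ∈ [ℓ,ℓ') : α n < a}` increases with `a`. -/
theorem sF_supermod {α : Equiv.Perm ℤ} (hα : ASP α) {a a' ℓ ℓ' : ℤ} (ha : a ≤ a') (hl : ℓ ≤ ℓ') :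
    sF α a ℓ + sF α a' ℓ' ≤ sF α a ℓ' + sF α a' ℓ := by
  induction a', ha using Int.leInduction with
  | base => omega
  | succ c hc ih =>
    rw [sF_step_left hα, sF_step_left hα]
    split_ifs <;> omega

/-! ### The shift -/

/-- The indicator function of `(-∞, c)`. -/
def below (c n : ℤ) : ℤ := if n < c then 1 else 0

theorem finsum_indicator {U : Set ℤ} (hU : U.Finite) :
    ∑ᶠ n, U.indicator (fun _ => (1 : ℤ)) n = U.ncard := by
  rw [← finsum_mem_def, finsum_mem_eq_finite_toFinset_sum _ hU, Set.ncard_eq_toFinset_card U hU]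
  simp

theorem support_finite {α : Equiv.Perm ℤ} (hα : ASP α) (a b : ℤ) :
    (Function.support fun n => below a (α n) - below b n).Finite := by
  refine ((asp_finite hα a b).union (finite_mul_inv (α := 1) (β := α) asp_one hα b a)).subset ?_
  intro n hn
  simp only [below, Function.mem_support, Set.mem_union, Set.mem_ofPred_eq, Equiv.Perm.one_apply] at *
  split_ifs at hn <;> omega

/-- As a signed count, the difference of the two slipface functions telescopes under
composition of permutations; this is what makes the shift additive. -/
theorem sF_sub_eq_finsum {α : Equiv.Perm ℤ} (hα : ASP α) (a b : ℤ) :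
    (sF α a b : ℤ) - sF α⁻¹ b a = ∑ᶠ n, (below a (α n) - below b n) := by
  have h1 := asp_finite hα a b
  have h2 := finite_mul_inv (α := 1) (β := α) asp_one hα b a
  have e := sF_mul_inv 1 α b a
  rw [one_mul] at e
  rw [e, sF, ← finsum_indicator h1, ← finsum_indicator h2, ← finsum_sub_distrib]
  · refine finsum_congr fun n => ?_
    simp only [below, Set.indicator_apply, Set.mem_ofPred_eq, Equiv.Perm.one_apply]
    split_ifs <;> omega
  · exact h1.subset Set.support_indicator_subset
  · exact h2.subset Set.support_indicator_subset

theorem shift_eq_finsum {α : Equiv.Perm ℤ} (hα : ASP α) :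
    shiftASP α = ∑ᶠ n, (below 0 (α n) - below 0 n) := sF_sub_eq_finsum hα 0 0

theorem shift_mul {α β : Equiv.Perm ℤ} (hα : ASP α) (hβ : ASP β) :
    shiftASP (α * β) = shiftASP α + shiftASP β := by
  rw [shift_eq_finsum (asp_mul hα hβ), shift_eq_finsum hα, shift_eq_finsum hβ,
    ← finsum_comp_equiv β (f := fun n => below 0 (α n) - below 0 n), ← finsum_add_distrib]
  · refine finsum_congr fun n => ?_
    simp
  · exact (support_finite hα 0 0).preimage (f := β) β.injective.injOn
  · exact support_finite hβ 0 0

theorem shift_inv (α : Equiv.Perm ℤ) : shiftASP α⁻¹ = - shiftASP α := by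
  simp [shiftASP]

/-- The shift governs the difference between the two slipface functions at every point. -/
theorem sF_sub_sF_inv {α : Equiv.Perm ℤ} (hα : ASP α) (a b : ℤ) :
    (sF α a b : ℤ) - sF α⁻¹ b a = shiftASP α + a - b := by
  have hL : ∀ a b, sF α (a + 1) b - sF α⁻¹ b (a + 1) = (sF α a b : ℤ) - sF α⁻¹ b a + 1 := by
    intro a b
    rw [sF_step_left hα, sF_step_right (asp_inv hα) b a]
    split_ifs <;> push_cast <;> omega
  have hR : ∀ a b, sF α a (b + 1) - sF α⁻¹ (b + 1) a = (sF α a b : ℤ) - sF α⁻¹ b a - 1 := by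
    intro a b
    rw [sF_step_left (asp_inv hα), sF_step_right hα a b, inv_inv]
    split_ifs <;> push_cast <;> omega
  have h1 : ∀ a, (sF α a 0 : ℤ) - sF α⁻¹ 0 a = shiftASP α + a := by
    intro a
    induction a using Int.induction_on with
    | zero => simp [shiftASP]
    | succ i ih => rw [hL, ih]; ring
    | pred i ih =>
      have := hL (-(i : ℤ) - 1) 0
      rw [sub_add_cancel] at this
      omega
  induction b using Int.induction_on with
  | zero => rw [h1]; ring
  | succ i ih => rw [hR, ih]; ring
  | pred i ih =>
    have := hR a (-(i : ℤ) - 1)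
    rw [sub_add_cancel] at this
    omega

theorem exists_sF_eq_zero_left {α : Equiv.Perm ℤ} (hα : ASP α) (b : ℤ) :
    ∃ a₀, ∀ a ≤ a₀, sF α a b = 0 := by
  obtain ⟨m, hm⟩ := ((asp_finite hα 0 b).image α).bddBelow
  refine ⟨min m 0, fun a ha => ?_⟩
  rw [sF, Set.ncard_eq_zero (asp_finite hα a b), Set.eq_empty_iff_forall_notMem]
  rintro n ⟨h1, h2⟩
  have := hm ⟨n, ⟨h1, by omega⟩, rfl⟩
  omega

theorem exists_sF_eq_zero_right {α : Equiv.Perm ℤ} (hα : ASP α) (a : ℤ) :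
    ∃ b₀, ∀ b ≥ b₀, sF α a b = 0 := by
  obtain ⟨m, hm⟩ := (asp_finite hα a 0).bddAbove
  refine ⟨max (m + 1) 0, fun b hb => ?_⟩
  rw [sF, Set.ncard_eq_zero (asp_finite hα a b), Set.eq_empty_iff_forall_notMem]
  rintro n ⟨h1, h2⟩
  have := hm (show n ∈ _ from ⟨by omega, h2⟩)
  omega

/-! ### Inversions of `α ◁ β⁻¹`

The hypotheses `hle` and `hex` express `s_δ(a,b) = max_ℓ [s_α(a,ℓ) - s_β(b,ℓ)]` without subtraction
of natural numbers. -/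

/-- `δ` and `β⁻¹` have no common inversion, so the product `δ β` is reduced. As `b` grows, the
maximizers `ℓ` of `s_α(a,ℓ) - s_β(b,ℓ)` move to the right, whereas a common inversion `(u,v)`
would produce one for `b = v` to the left of all those for `b = u + 1`. -/
theorem inv_disjoint {α β δ : Equiv.Perm ℤ} (hβ : ASP β) (hδ : ASP δ)
    (hle : ∀ a b ℓ, sF α a ℓ ≤ sF δ a b + sF β b ℓ)
    (hex : ∀ a b, ∃ ℓ, sF α a ℓ = sF δ a b + sF β b ℓ)
    {u v : ℤ} (huv : u < v) (hd : δ v < δ u) (hb : β⁻¹ v < β⁻¹ u) : False := by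
  set a := δ u with ha
  obtain ⟨ℓ, h1⟩ := hex a v
  obtain ⟨ℓ', h2⟩ := hex a (u + 1)
  have e1 := sF_step_right hδ a v
  rw [if_pos hd] at e1
  have e2 := sF_step_right hδ a u
  rw [if_neg (by omega)] at e2
  -- `ℓ ≤ β⁻¹ v`, since the value at `ℓ` has to drop from `b = v` to `b = v + 1`
  have hl : ℓ ≤ β⁻¹ v := by
    by_contra h
    have h3 := sF_step_left hβ v ℓ
    rw [if_neg h] at h3
    have := hle a (v + 1) ℓ
    omega
  -- `β⁻¹ u < ℓ'`, since the value at `ℓ'` must not drop from `b = u` to `b = u + 1`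
  have hl' : β⁻¹ u < ℓ' := by
    by_contra h
    have h3 := sF_step_left hβ u ℓ'
    rw [if_pos (by omega)] at h3
    have := hle a u ℓ'
    omega
  have hs := sF_supermod hβ (show u + 1 ≤ v by omega) (show ℓ ≤ ℓ' by omega)
  have h3 := sF_step_left hβ u ℓ
  rw [if_pos (by omega)] at h3
  have h4 := hle a u ℓ
  have h5 := hle a v ℓ'
  omega

/-- Every inversion of `δ⁻¹` is one of `α⁻¹`. As `a` grows, the maximizers `ℓ` of
`s_α(a,ℓ) - s_β(b,ℓ)` move to the left. -/
theorem inv_subset {α β δ : Equiv.Perm ℤ} (hα : ASP α) (hδ : ASP δ)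
    (hle : ∀ a b ℓ, sF α a ℓ ≤ sF δ a b + sF β b ℓ)
    (hex : ∀ a b, ∃ ℓ, sF α a ℓ = sF δ a b + sF β b ℓ)
    {x y : ℤ} (hxy : x < y) (hd : δ⁻¹ y < δ⁻¹ x) : α⁻¹ y < α⁻¹ x := by
  have hne : α⁻¹ y ≠ α⁻¹ x := fun h => by
    have := α⁻¹.injective h
    omega
  by_contra hc
  set b := δ⁻¹ x with hb
  obtain ⟨ℓ, h1⟩ := hex (x + 1) b
  obtain ⟨ℓ', h2⟩ := hex y b
  have e1 := sF_step_left hδ x b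
  rw [if_pos (by omega)] at e1
  have e2 := sF_step_left hδ y b
  rw [if_neg (by omega)] at e2
  have hl : ℓ ≤ α⁻¹ x := by
    by_contra h
    have h3 := sF_step_left hα x ℓ
    rw [if_neg h] at h3
    have := hle x b ℓ
    omega
  have hl' : α⁻¹ y < ℓ' := by
    by_contra h
    have h3 := sF_step_left hα y ℓ'
    rw [if_pos (by omega)] at h3
    have := hle (y + 1) b ℓ'
    omega
  have hs := sF_supermod hα (show x + 1 ≤ y by omega) (show ℓ ≤ ℓ' by omega)
  have h3 := sF_step_left hα y ℓ
  rw [if_pos (by omega)] at h3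
  have h4 := hle (y + 1) b ℓ
  have h5 := hle (x + 1) b ℓ'
  omega

/-! ### Attaining the minima -/

theorem le_mul {α β δ : Equiv.Perm ℤ} (hβ : ASP β) (hδ : ASP δ)
    (hle : ∀ a b ℓ, sF α a ℓ ≤ sF δ a b + sF β b ℓ)
    (hex : ∀ a b, ∃ ℓ, sF α a ℓ = sF δ a b + sF β b ℓ) :
    BruhatLE α (δ * β) := by
  intro a ℓ
  -- every element of `A` is below every element of `B`, as `δ` and `β⁻¹` have no common inversion;
  -- the cut `b` separates `A` from `B`
  set A : Set ℤ := {m | δ m < a ∧ β⁻¹ m < ℓ} with hA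
  set B : Set ℤ := {m | a ≤ δ m ∧ ℓ ≤ β⁻¹ m} with hB
  have hAB : ∀ x ∈ A, ∀ y ∈ B, x < y := by
    rintro x ⟨hx1, hx2⟩ y ⟨hy1, hy2⟩
    by_contra h
    rcases (not_lt.1 h).lt_or_eq with h | rfl
    · exact inv_disjoint hβ hδ hle hex h (by omega) (by omega)
    · omega
  obtain ⟨b, hb1, hb2⟩ : ∃ b, (∀ x ∈ A, x < b) ∧ ∀ y ∈ B, b ≤ y := by
    by_cases hne : B.Nonempty
    · by_cases hne' : A.Nonempty
      · obtain ⟨x, hx⟩ := hne'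
        obtain ⟨b, hb, hb'⟩ := Int.exists_least_of_bdd (P := (· ∈ B))
          ⟨x, fun y hy => (hAB x hx y hy).le⟩ hne
        exact ⟨b, fun x hx => hAB x hx b hb, hb'⟩
      · -- `A` contains all sufficiently negative integers
        exfalso
        obtain ⟨m, hm⟩ := ((finite_mul_inv asp_one hδ 0 a).union
          (finite_mul_inv asp_one (asp_inv hβ) 0 ℓ)).bddBelow
        refine hne' ⟨min m 0 - 1, ?_⟩
        have h1 : min m 0 - 1 ∉ _ := fun h => absurd (hm h) (by omega)
        simp only [Set.mem_union, Set.mem_ofPred_eq, Equiv.Perm.one_apply] at h1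
        simp only [hA, Set.mem_ofPred_eq]
        omega
    · obtain ⟨m, hm⟩ := ((asp_finite hδ a 0).bddAbove)
      refine ⟨max (m + 1) 0, fun x hx => ?_, fun y hy => (hne ⟨y, hy⟩).elim⟩
      by_contra h
      have := hm (show x ∈ _ from ⟨by omega, hx.1⟩)
      omega
  refine (hle a b ℓ).trans ?_
  have e1 := sF_mul_inv 1 β⁻¹ b ℓ
  have e2 := sF_mul_inv δ β⁻¹ a ℓ
  rw [inv_inv, one_mul] at e1
  rw [inv_inv] at e2
  rw [e1, e2, sF, ← Set.ncard_union_eq _ (asp_finite hδ a b)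
    (finite_mul_inv asp_one (asp_inv hβ) b ℓ)]
  · refine Set.ncard_le_ncard ?_ (finite_mul_inv hδ (asp_inv hβ) a ℓ)
    rintro n (⟨h1, h2⟩ | ⟨h1, h2⟩)
    · refine ⟨?_, h2⟩
      by_contra h
      have := hb1 n ⟨h2, by omega⟩
      omega
    · refine ⟨h1, ?_⟩
      by_contra h
      have := hb2 n ⟨by omega, h1⟩
      simp at h2
      omega
  · rw [Set.disjoint_left]
    rintro n ⟨h1, -⟩ ⟨-, h2⟩
    simp at h2
    omega

theorem mul_le {α β δ : Equiv.Perm ℤ} (hα : ASP α) (hδ : ASP δ)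
    (hle : ∀ a b ℓ, sF α a ℓ ≤ sF δ a b + sF β b ℓ)
    (hex : ∀ a b, ∃ ℓ, sF α a ℓ = sF δ a b + sF β b ℓ) :
    BruhatLE (δ⁻¹ * α) β := by
  intro b ℓ
  have hfin := asp_finite (asp_mul (asp_inv hδ) hα) b ℓ
  rcases Set.eq_empty_or_nonempty {n : ℤ | ℓ ≤ n ∧ (δ⁻¹ * α) n < b} with h0 | hne
  · rw [sF, h0, Set.ncard_empty]
    exact Nat.zero_le _
  -- the cut is just above the largest value `α n₀` of `α` on the counted set
  obtain ⟨n₀, ⟨hn1, hn2⟩, hmax⟩ := Set.exists_max_image _ α hfin hne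
  rw [Equiv.Perm.mul_apply] at hn2
  set a := α n₀ + 1 with ha
  have key := hle a b ℓ
  have e1 := sF_mul_inv α (δ⁻¹ * α) a b
  rw [show α * (δ⁻¹ * α)⁻¹ = δ by group] at e1
  have hQ := finite_mul_inv hα (asp_mul (asp_inv hδ) hα) a b
  have hcard : sF δ a b + sF (δ⁻¹ * α) b ℓ ≤ sF α a ℓ := by
    rw [e1, sF, ← Set.ncard_union_eq _ hQ hfin]
    · refine Set.ncard_le_ncard ?_ (asp_finite hα a ℓ)
      rintro n (⟨h1, h2⟩ | ⟨h1, h2⟩)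
      · refine ⟨?_, h2⟩
        by_contra h
        rw [Equiv.Perm.mul_apply] at h1
        have hlt : α n < α n₀ := by
          have : α n ≠ α n₀ := fun h' => by
            have := α.injective h'
            omega
          omega
        have := inv_subset hα hδ hle hex hlt (by omega)
        simp at this
        omega
      · have := hmax n ⟨h1, h2⟩
        exact ⟨h1, by omega⟩
    · rw [Set.disjoint_left]
      rintro n ⟨h1, -⟩ ⟨-, h2⟩
      omega
  omega

theorem shift_triL {α β δ : Equiv.Perm ℤ} (hα : ASP α) (hβ : ASP β) (hδ : ASP δ)
    (hle : ∀ a b ℓ, sF α a ℓ ≤ sF δ a b + sF β b ℓ)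
    (hex : ∀ a b, ∃ ℓ, sF α a ℓ = sF δ a b + sF β b ℓ) :
    shiftASP δ = shiftASP α - shiftASP β := by
  apply le_antisymm
  · -- for `a ≫ 0 ≫ b` and every `ℓ`, `{m < ℓ : a ≤ α m} ⊆ [0, ℓ) ⊆ {m < ℓ : b ≤ β m}`
    obtain ⟨a₀, ha⟩ := exists_sF_eq_zero_right (asp_inv hα) 0
    obtain ⟨b₀, hb⟩ := exists_sF_eq_zero_left hβ 0
    have ha := ha a₀ le_rfl
    have hb := hb b₀ le_rfl
    have eα := sF_mul_inv 1 α 0 a₀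
    rw [one_mul, ha, eq_comm, Set.ncard_eq_zero (finite_mul_inv asp_one hα 0 a₀),
      Set.eq_empty_iff_forall_notMem] at eα
    rw [sF, Set.ncard_eq_zero (asp_finite hβ b₀ 0), Set.eq_empty_iff_forall_notMem] at hb
    obtain ⟨ℓ, hl⟩ := hex a₀ b₀
    have hcmp : sF α⁻¹ ℓ a₀ ≤ sF β⁻¹ ℓ b₀ := by
      have e1 := sF_mul_inv 1 α ℓ a₀
      have e2 := sF_mul_inv 1 β ℓ b₀
      rw [one_mul] at e1 e2
      rw [e1, e2]
      refine Set.ncard_le_ncard ?_ (finite_mul_inv asp_one hβ ℓ b₀)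
      rintro m ⟨h1, h2⟩
      have h3 := eα m
      have h4 := hb m
      simp only [Set.mem_ofPred_eq, Equiv.Perm.one_apply] at *
      omega
    have h1 := sF_sub_sF_inv hα a₀ ℓ
    have h2 := sF_sub_sF_inv hβ b₀ ℓ
    have h3 := sF_sub_sF_inv hδ a₀ b₀
    omega
  · obtain ⟨a, ha⟩ := exists_sF_eq_zero_right (asp_inv hδ) 0
    obtain ⟨ℓ, hl⟩ := exists_sF_eq_zero_left (asp_inv hβ) 0
    have h0 := hle a 0 ℓ
    have ha := ha a le_rfl
    have hl := hl ℓ le_rfl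
    have h1 := sF_sub_sF_inv hα a ℓ
    have h2 := sF_sub_sF_inv hβ 0 ℓ
    have h3 := sF_sub_sF_inv hδ a 0
    omega

/-- For every `ℓ`, the points `m ≥ ℓ` with `α₁ m < a` that are not counted by the slipface function
of `α₁ β₁⁻¹` at `(a,b)` have `β₁ m < b`. -/
theorem lower_bound {α β δ α₁ β₁ : Equiv.Perm ℤ}
    (hex : ∀ a b, ∃ ℓ, sF α a ℓ = sF δ a b + sF β b ℓ) (hα₁ : ASP α₁) (hβ₁ : ASP β₁)
    (h1 : BruhatLE α α₁) (h2 : BruhatLE β₁ β) : BruhatLE δ (α₁ * β₁⁻¹) := by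
  intro a b
  obtain ⟨ℓ, hl⟩ := hex a b
  have h1 := h1 a ℓ
  have h2 := h2 b ℓ
  have key : sF α₁ a ℓ ≤ sF (α₁ * β₁⁻¹) a b + sF β₁ b ℓ := by
    rw [sF_mul_inv, sF, sF]
    refine (Set.ncard_le_ncard ?_ ((finite_mul_inv hα₁ hβ₁ a b).union (asp_finite hβ₁ b ℓ))).trans
      (Set.ncard_union_le _ _)
    rintro n ⟨h1, h2⟩
    simp only [Set.mem_union, Set.mem_ofPred_eq]
    omega
  omega

/-- The "stingy" characterization: `α ◁ β⁻¹` is simultaneously the Bruhat-minimum of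
`{α₁β₁⁻¹ : α₁ ≥ α, β₁ ≤ β}`, of `{αβ₁⁻¹ : β₁ ≤_χ β}`, and of `{α₁β⁻¹ : α₁ ≥_χ α}`. -/
theorem triL_stingy (α β : Equiv.Perm ℤ) (hα : ASP α) (hβ : ASP β)
    (δ : Equiv.Perm ℤ) (hδ : ASP δ) (htri : IsTriL α β⁻¹ δ) :
    ((∃ α₁ β₁ : Equiv.Perm ℤ, ASP α₁ ∧ ASP β₁ ∧ BruhatLE α α₁ ∧ BruhatLE β₁ β ∧
        δ = α₁ * β₁⁻¹) ∧
      (∀ α₁ β₁ : Equiv.Perm ℤ, ASP α₁ → ASP β₁ → BruhatLE α α₁ → BruhatLE β₁ β →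
        BruhatLE δ (α₁ * β₁⁻¹))) ∧
    ((∃ β₁ : Equiv.Perm ℤ, ASP β₁ ∧ BruhatLEchi β₁ β ∧ δ = α * β₁⁻¹) ∧
      (∀ β₁ : Equiv.Perm ℤ, ASP β₁ → BruhatLEchi β₁ β → BruhatLE δ (α * β₁⁻¹))) ∧
    ((∃ α₁ : Equiv.Perm ℤ, ASP α₁ ∧ BruhatLEchi α α₁ ∧ δ = α₁ * β⁻¹) ∧
      (∀ α₁ : Equiv.Perm ℤ, ASP α₁ → BruhatLEchi α α₁ → BruhatLE δ (α₁ * β⁻¹))) := by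
  simp only [IsTriL, inv_inv] at htri
  have hle : ∀ a b ℓ, sF α a ℓ ≤ sF δ a b + sF β b ℓ := fun a b ℓ => by
    have := (htri a b).2 ⟨ℓ, rfl⟩
    omega
  have hex : ∀ a b, ∃ ℓ, sF α a ℓ = sF δ a b + sF β b ℓ := fun a b => by
    obtain ⟨ℓ, hl⟩ := (htri a b).1
    exact ⟨ℓ, by omega⟩
  have hrefl : ∀ σ : Equiv.Perm ℤ, BruhatLE σ σ := fun σ a b => le_rfl
  have hlow := fun α₁ β₁ => @lower_bound α β δ α₁ β₁ hex
  have hsh := shift_triL hα hβ hδ hle hex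
  have h3 := le_mul hβ hδ hle hex
  have h2 := mul_le hα hδ hle hex
  have hβ₁ := asp_mul (asp_inv hδ) hα
  have hα₁ := asp_mul hδ hβ
  have e2 : δ = α * (δ⁻¹ * α)⁻¹ := by group
  have e3 : δ = δ * β * β⁻¹ := by group
  refine ⟨⟨⟨α, δ⁻¹ * α, hα, hβ₁, hrefl α, h2, e2⟩,
      fun α₁ β₁ h h' => hlow α₁ β₁ h h'⟩,
    ⟨⟨δ⁻¹ * α, hβ₁, ⟨h2, ?_⟩, e2⟩, fun β₁ h h' => hlow α β₁ hα h (hrefl α) h'.1⟩,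
    ⟨⟨δ * β, hα₁, ⟨h3, ?_⟩, e3⟩, fun α₁ h h' => hlow α₁ β h hβ h'.1 (hrefl β)⟩⟩
  · rw [shift_mul (asp_inv hδ) hα, shift_inv, hsh]
    ring
  · rw [shift_mul hδ hβ, hsh]
    ring
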